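/- arXiv:1907.05725 — 2 statements merged into one kernel-verified Lean document; each statement's English description precedes it below -/
import Mathlib

section
/- For all integers k ≥ 1 and c ≥ 2k, there exist finite simple graphs G and H on the same number of vertices and a bijection Φ from V(G) to V(H) such that d_k^G(v) = d_k^H(Φ(v)) for every vertex v of G, G contains a matching of size at least (c+1)·c^k / 2, and H has a vertex cover of size at most 2k·c^k. -/
open SimpleGraph

/-- A set of edges of `G` forming a matching: pairwise vertex-disjoint edges of `G`. -/
def IsMatchingSet {V : Type*} (G : SimpleGraph V) (M : Set (Sym2 V)) : Prop :=
  M ⊆ G.edgeSet ∧ ∀ e ∈ M, ∀ f ∈ M, e ≠ f → ∀ v : V, ¬(v ∈ e ∧ v ∈ f)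

/-- The matching number `ν(G)`: the maximum size of a matching in `G`. -/
noncomputable def matchingNumber {V : Type*} (G : SimpleGraph V) : ℕ :=
  sSup {n | ∃ M : Set (Sym2 V), IsMatchingSet G M ∧ M.ncard = n}
/-- The type of `k`-level degrees: `LD 0 = ℕ` records a plain degree (a `1`-level degree),
and a `(k+2)`-level degree is a multiset of `(k+1)`-level degrees. -/
def LD : ℕ → Type
  | 0 => ℕ
  | (k+1) => Multiset (LD k)

/-- `kdeg G k v` is the `(k+1)`-level degree `d_{k+1}^G(v)`: `kdeg G 0 v = deg_G v`, and
`kdeg G (k+1) v` is the multiset of the values `kdeg G k w` over the neighbors `w` of `v`.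
Thus for `k ≥ 1` the quantity `d_k^G(v)` of the paper is `kdeg G (k-1) v`. -/
noncomputable def kdeg {V : Type*} [Fintype V] (G : SimpleGraph V) : (k : ℕ) → V → LD k
  | 0, v => (G.neighborSet v).ncard
  | (k+1), v => ((G.neighborSet v).toFinite.toFinset.val).map (kdeg G k)

/-!
Both graphs are bipartite double covers of blow-ups of small weighted quotients, so that the
level degrees of a vertex are determined by its cell in the quotient. The cells have ranks
`0, …, k`: there are `t = c - k + 1` cells of rank `0` and one of each other rank. Cells of ranks
`i` and `j` with `|i - j| ≥ 2` are joined by weight `c ^ (max i j - 1)`, and the diagonal weight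
of a cell is whatever is missing to the prescribed total weight, which is the same for all ranks
below `k`. (It is not exceeded: the `t + i` cells joined to rank `i + 1` from below contribute at
most `(t + i) * c ^ i ≤ c ^ (i + 1)`, which is what rank `0` sends to rank `i + 2`.) Hence two
cells of rank at most `i` differ only in their weights towards cells of rank at most `i + 1`, and
by induction the `r`-level degrees do not see any difference between ranks up to `k - r`.

In `G` this leaves a positive diagonal weight on every cell of rank `0` or `1`, and the two copies
of such a cell are perfectly matched. In `H` one additionally joins ranks `0` and `1` by weight
`1`, which exactly exhausts the prescribed total for rank `0`: rank `0` becomes independent, and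
the remaining `k` cells cover all edges. As ranks `0` and `1` look alike up to level `k - 1`, this
change is invisible to `k`-level degrees.
-/

section Graphs

variable {V V' : Type*} {G : SimpleGraph V} {H : SimpleGraph V'}

theorem kdeg_iso [Fintype V] [Fintype V'] (φ : G ≃g H) (r : ℕ) (v : V) :
    kdeg H r (φ v) = kdeg G r v := by
  induction r generalizing v with
  | zero =>
    change (H.neighborSet (φ v)).ncard = (G.neighborSet v).ncard
    rw [← φ.image_neighborSet, Set.ncard_image_of_injective _ φ.injective]
  | succ r ih =>
    have neighbors : (H.neighborSet (φ v)).toFinite.toFinset =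
        (G.neighborSet v).toFinite.toFinset.map φ.toEquiv.toEmbedding := by
      rw [← Finset.coe_inj]
      simpa using φ.image_neighborSet.symm
    change Multiset.map (kdeg H r) _ = Multiset.map (kdeg G r) _
    rw [neighbors, Finset.map_val, Multiset.map_map]
    exact Multiset.map_congr rfl fun w _ => ih w

theorem IsMatchingSet.image {M : Set (Sym2 V)} (hM : IsMatchingSet G M) (φ : G ↪g H) :
    IsMatchingSet H (Sym2.map φ '' M) := by
  refine ⟨?_, ?_⟩
  · rintro _ ⟨e, he, rfl⟩
    exact (φ.mapEdgeSet ⟨e, hM.1 he⟩).2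
  · rintro _ ⟨e, he, rfl⟩ _ ⟨f, hf, rfl⟩ hne v ⟨hve, hvf⟩
    obtain ⟨x, hxe, rfl⟩ := Sym2.mem_map.1 hve
    obtain ⟨y, hyf, hyx⟩ := Sym2.mem_map.1 hvf
    obtain rfl := φ.injective hyx
    exact hM.2 e he f hf (fun h => hne (h ▸ rfl)) y ⟨hxe, hyf⟩

theorem exists_mem_of_isVertexCover {C : Set V} (hC : G.IsVertexCover C) :
    ∀ e ∈ G.edgeSet, ∃ v ∈ C, v ∈ e := by
  rintro ⟨v, w⟩ hvw
  obtain hv | hw := hC hvw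
  · exact ⟨v, hv, Sym2.mem_mk_left v w⟩
  · exact ⟨w, hw, Sym2.mem_mk_right v w⟩

end Graphs

section Quotient

variable {U : Type*}

/-- The fibers of `π` form an equitable partition of `G` with quotient matrix `W`: every vertex
in cell `u` has exactly `W u u'` neighbors in cell `u'`. -/
def IsEquitable {V : Type*} (G : SimpleGraph V) (π : V → U) (W : Matrix U U ℕ) : Prop :=
  ∀ v u, (G.neighborSet v ∩ π ⁻¹' {u}).ncard = W (π v) u

variable [Fintype U]

/-- The level degrees computed from a weight matrix `W` on `U`, in which `W u v` counts the
neighbors in cell `v` of any vertex in cell `u`. As for `kdeg`, the index `r` stands for the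
`(r + 1)`-level degree. -/
def quotientDegree (W : Matrix U U ℕ) : (r : ℕ) → U → LD r
  | 0, u => (∑ v, W u v : ℕ)
  | r + 1, u => (∑ v, W u v • {quotientDegree W r v} : Multiset (LD r))

theorem IsEquitable.sum_neighbors {V A : Type*} [Finite V] [AddCommMonoid A] {G : SimpleGraph V}
    {π : V → U} {W : Matrix U U ℕ} (h : IsEquitable G π W) (v : V) (f : U → A) :
    ∑ w ∈ (G.neighborSet v).toFinite.toFinset, f (π w) = ∑ u, W (π v) u • f u := by
  classical
  rw [← Finset.sum_fiberwise _ π]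
  refine Finset.sum_congr rfl fun u _ => ?_
  have count : {w ∈ (G.neighborSet v).toFinite.toFinset | π w = u}.card = W (π v) u := by
    rw [← h v u, ← Set.ncard_coe_finset]
    congr 1
    ext w
    simp
  rw [← count]
  exact Finset.sum_eq_card_nsmul fun w hw => by rw [(Finset.mem_filter.1 hw).2]

theorem IsEquitable.kdeg_eq {V : Type*} [Fintype V] {G : SimpleGraph V} {π : V → U}
    {W : Matrix U U ℕ} (h : IsEquitable G π W) (r : ℕ) (v : V) :
    kdeg G r v = quotientDegree W r (π v) := by
  induction r generalizing v with
  | zero =>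
    change (G.neighborSet v).ncard = ∑ u, W (π v) u
    rw [Set.ncard_eq_toFinset_card]
    rw [Finset.card_eq_sum_ones, h.sum_neighbors v fun _ => 1]
    simp only [smul_eq_mul, mul_one]
  | succ r ih =>
    change Multiset.map (kdeg G r) _ = ∑ u, W (π v) u • {quotientDegree W r u}
    rw [← h.sum_neighbors v, funext ih, ← Multiset.sum_map_singleton (Multiset.map _ _),
      Multiset.map_map]
    rfl

theorem sum_smul_eq_sum_smul {A : Type*} [AddCommMonoid A] {a b : U → ℕ} {f : U → A}
    (S : Finset U) (hsum : ∑ u, a u = ∑ u, b u) (hab : ∀ u ∉ S, a u = b u)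
    (hf : ∀ u ∈ S, ∀ v ∈ S, f u = f v) :
    ∑ u, a u • f u = ∑ u, b u • f u := by
  classical
  have hab' : ∀ u ∈ Sᶜ, a u = b u := fun u hu => hab u (Finset.mem_compl.1 hu)
  have weight_eq : ∑ u ∈ S, a u = ∑ u ∈ S, b u := by
    rw [← Finset.sum_add_sum_compl S a, ← Finset.sum_add_sum_compl S b,
      Finset.sum_congr rfl hab'] at hsum
    exact Nat.add_right_cancel hsum
  rw [← Finset.sum_add_sum_compl S, ← Finset.sum_add_sum_compl S fun u => b u • f u,
    Finset.sum_congr (s₁ := Sᶜ) rfl fun u hu => by rw [hab' u hu]]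
  congr 1
  obtain rfl | ⟨x, hx⟩ := S.eq_empty_or_nonempty
  · rfl
  · have pull (w : U → ℕ) : ∑ u ∈ S, w u • f u = (∑ u ∈ S, w u) • f x := by
      rw [Finset.sum_smul]
      exact Finset.sum_congr rfl fun u hu => by rw [hf u hu x hx]
    rw [pull, pull, weight_eq]

variable {W W' : Matrix U U ℕ} {rank : U → ℕ} {N : ℕ}

theorem quotientDegree_eq_of_rank_add_lt
    (hsum : ∀ u v, rank u < N → rank v < N → ∑ q, W u q = ∑ q, W v q)
    (hcol : ∀ u v q, rank u + 2 ≤ rank q → rank v + 2 ≤ rank q → W u q = W v q)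
    {r : ℕ} {u v : U} (hu : rank u + r < N) (hv : rank v + r < N) :
    quotientDegree W r u = quotientDegree W r v := by
  induction r generalizing u v with
  | zero => exact hsum u v hu hv
  | succ r ih =>
    refine sum_smul_eq_sum_smul (A := Multiset (LD r)) {q | rank q + r < N}
      (hsum u v (by omega) (by omega)) (fun q hq => ?_) fun q hq q' hq' => ?_
    · simp only [Finset.mem_filter_univ, not_lt] at hq
      exact hcol u v q (by omega) (by omega)
    · rw [ih (Finset.mem_filter_univ q |>.1 hq) (Finset.mem_filter_univ q' |>.1 hq')]

theorem quotientDegree_congr_of_rank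
    (hsum : ∀ u v, rank u < N → rank v < N → ∑ q, W u q = ∑ q, W v q)
    (hcol : ∀ u v q, rank u + 2 ≤ rank q → rank v + 2 ≤ rank q → W u q = W v q)
    (hsum' : ∀ u, ∑ q, W' u q = ∑ q, W u q)
    (hcol' : ∀ u q, 2 ≤ rank q → W' u q = W u q) {r : ℕ} (hr : r < N) :
    quotientDegree W' r = quotientDegree W r := by
  induction r with
  | zero => exact funext hsum'
  | succ r ih =>
    funext u
    change (∑ q, W' u q • {quotientDegree W' r q} : Multiset (LD r)) = _
    rw [ih (by omega)]
    refine sum_smul_eq_sum_smul (A := Multiset (LD r)) {q | rank q < 2} (hsum' u)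
      (fun q hq => ?_) fun q hq q' hq' => ?_
    · exact hcol' u q (by simpa [Nat.succ_le_iff] using hq)
    · simp only [Finset.mem_filter_univ] at hq hq'
      rw [quotientDegree_eq_of_rank_add_lt hsum hcol (u := q) (v := q') (by omega) (by omega)]

end Quotient

section DoubleBlowup

variable {U : Type*} {W : Matrix U U ℕ} {M : ℕ}

/-- The bipartite double cover of the blow-up of a symmetric weight matrix: each cell `u` becomes
two copies of `ZMod M`, and the two sides are joined between cells `u` and `v` by a
`W u v`-regular bipartite graph. Adjacency depends on the sum of the `ZMod M` coordinates in order
to be symmetric. -/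
def doubleBlowup (M : ℕ) (W : Matrix U U ℕ) (hW : W.IsSymm) :
    SimpleGraph (Bool × U × ZMod M) where
  Adj v w := v.1 ≠ w.1 ∧ (v.2.2 + w.2.2).val < W v.2.1 w.2.1
  symm := ⟨fun v w h => ⟨h.1.symm, by rw [add_comm, hW.apply]; exact h.2⟩⟩
  loopless := ⟨fun _ h => h.1 rfl⟩

theorem ncard_setOf_val_add_lt [NeZero M] (x : ZMod M) {d : ℕ} (hd : d ≤ M) :
    {y : ZMod M | (x + y).val < d}.ncard = d := by
  have image_eq : (fun y => (x + y).val) '' {y : ZMod M | (x + y).val < d} = Finset.range d := by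
    ext i
    simp only [Set.mem_image, Set.mem_ofPred_eq, Finset.coe_range, Set.mem_Iio]
    refine ⟨by rintro ⟨y, hy, rfl⟩; exact hy, fun hi => ⟨i - x, ?_⟩⟩
    simp [ZMod.val_cast_of_lt (hi.trans_le hd), hi]
  have injective : Function.Injective fun y : ZMod M => (x + y).val :=
    (ZMod.val_injective M).comp (add_right_injective x)
  rw [← Set.ncard_image_of_injective _ injective, image_eq, Set.ncard_coe_finset,
    Finset.card_range]

theorem isEquitable_doubleBlowup [NeZero M] (hW : W.IsSymm) (hM : ∀ u v, W u v ≤ M) :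
    IsEquitable (doubleBlowup M W hW) (fun v => v.2.1) W := by
  rintro ⟨β, u, x⟩ u'
  have neighbors : (doubleBlowup M W hW).neighborSet (β, u, x) ∩ (fun v => v.2.1) ⁻¹' {u'} =
      (fun y => (!β, u', y)) '' {y | (x + y).val < W u u'} := by
    ext ⟨γ, q, y⟩
    simp only [doubleBlowup, Set.mem_inter_iff, SimpleGraph.mem_neighborSet, Set.mem_preimage,
      Set.mem_singleton_iff, Set.mem_image, Set.mem_ofPred_eq, Prod.mk.injEq]
    cases β <;> cases γ <;> grind
  rw [neighbors, Set.ncard_image_of_injective _ fun y z h => by simpa using h,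
    ncard_setOf_val_add_lt x (hM u u')]

theorem exists_isMatchingSet_doubleBlowup (hW : W.IsSymm) (S : Finset U)
    (hS : ∀ u ∈ S, 0 < W u u) :
    ∃ E, IsMatchingSet (doubleBlowup M W hW) E ∧ E.ncard = S.card * M := by
  let edge (a : S × ZMod M) : Sym2 (Bool × U × ZMod M) := s((false, a.1, a.2), (true, a.1, -a.2))
  have edge_eq {a b : S × ZMod M} {v} (ha : v ∈ edge a) (hb : v ∈ edge b) : a = b := by
    simp only [edge, Sym2.mem_iff] at ha hb
    ext <;> grind
  have edge_injective : Function.Injective edge := fun a b h =>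
    edge_eq (Sym2.mem_mk_left _ _) (h ▸ Sym2.mem_mk_left _ _)
  refine ⟨Set.range edge, ⟨?_, ?_⟩, ?_⟩
  · rintro _ ⟨⟨u, x⟩, rfl⟩
    exact ⟨Bool.false_ne_true, by simpa using hS u u.2⟩
  · rintro _ ⟨a, rfl⟩ _ ⟨b, rfl⟩ hne v ⟨ha, hb⟩
    exact hne (congrArg edge (edge_eq ha hb))
  · rw [Set.ncard_range_of_injective edge_injective, Nat.card_prod, Nat.card_zmod]
    simp

theorem isVertexCover_doubleBlowup (hW : W.IsSymm) {S : Set U}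
    (hS : ∀ u ∉ S, ∀ v ∉ S, W u v = 0) :
    (doubleBlowup M W hW).IsVertexCover (Set.univ ×ˢ S ×ˢ Set.univ) := by
  rintro ⟨β, u, x⟩ ⟨γ, v, y⟩ ⟨-, hxy : (x + y).val < W u v⟩
  by_contra! h
  simp only [Set.mem_prod, Set.mem_univ, true_and, and_true] at h
  simp [hS u h.1 v h.2] at hxy

end DoubleBlowup

section FillDiagonal

variable {U : Type*} [Fintype U] [DecidableEq U] {K : Matrix U U ℕ} {d : U → ℕ}

/-- Raises the diagonal entries of `K` so that the row sums become `d`. The subtraction is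
truncated, so this presupposes that no row sum of `K` exceeds `d`. -/
def fillDiagonal (K : Matrix U U ℕ) (d : U → ℕ) : Matrix U U ℕ :=
  K + Matrix.diagonal fun u => d u - ∑ v, K u v

theorem isSymm_fillDiagonal (hK : K.IsSymm) (d : U → ℕ) : (fillDiagonal K d).IsSymm :=
  hK.add (Matrix.isSymm_diagonal _)

theorem fillDiagonal_apply_of_ne (K : Matrix U U ℕ) (d : U → ℕ) {u v : U} (h : u ≠ v) :
    fillDiagonal K d u v = K u v := by
  simp [fillDiagonal, h]

theorem fillDiagonal_apply_self (K : Matrix U U ℕ) (d : U → ℕ) (u : U) :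
    fillDiagonal K d u u = K u u + (d u - ∑ v, K u v) := by
  simp [fillDiagonal]

theorem sum_fillDiagonal {u : U} (h : ∑ v, K u v ≤ d u) : ∑ v, fillDiagonal K d u v = d u := by
  simp [fillDiagonal, Finset.sum_add_distrib, Matrix.diagonal_apply, h]

theorem fillDiagonal_apply_le {u : U} (h : ∑ v, K u v ≤ d u) (v : U) : fillDiagonal K d u v ≤ d u :=
  (Finset.single_le_sum_of_canonicallyOrdered (Finset.mem_univ v)).trans_eq (sum_fillDiagonal h)

end FillDiagonal

section Cells

/-- The cells of the quotient: `t` cells of rank `0` and one cell of each rank `1, …, k`. -/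
abbrev Cell (t k : ℕ) : Type := Fin t ⊕ Fin k

variable {t k c : ℕ}

/-- The rank of a cell: the smaller it is, the more levels of degrees are needed to tell the cell
from one of rank `0`. -/
def Cell.rank : Cell t k → ℕ
  | .inl _ => 0
  | .inr j => j + 1

/-- The weights between cells whose ranks differ by at least `2`. -/
def farMatrix (t k c : ℕ) : Matrix (Cell t k) (Cell t k) ℕ := fun u v =>
  if u.rank + 2 ≤ v.rank ∨ v.rank + 2 ≤ u.rank then c ^ (max u.rank v.rank - 1) else 0

/-- The unit weights between cells of ranks `0` and `1`, which distinguish the covered graph from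
the matched one. -/
def linkMatrix (t k : ℕ) : Matrix (Cell t k) (Cell t k) ℕ := fun u v =>
  if u.rank + v.rank = 1 then 1 else 0

/-- The total weight prescribed for a cell. -/
def cellDegree (c : ℕ) (u : Cell t k) : ℕ :=
  if u.rank < k then ∑ j ∈ Finset.range k, c ^ j else c ^ k

/-- The quotient of the graph with the large matching. -/
def matchedMatrix (t k c : ℕ) : Matrix (Cell t k) (Cell t k) ℕ :=
  fillDiagonal (farMatrix t k c) (cellDegree c)

/-- The quotient of the graph with the small vertex cover. -/
def coveredMatrix (t k c : ℕ) : Matrix (Cell t k) (Cell t k) ℕ :=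
  fillDiagonal (farMatrix t k c + linkMatrix t k) (cellDegree c)

theorem isSymm_farMatrix : (farMatrix t k c).IsSymm := by
  ext u v
  simp only [Matrix.transpose_apply, farMatrix, or_comm, max_comm]

theorem isSymm_linkMatrix : (linkMatrix t k).IsSymm := by
  ext u v
  simp only [Matrix.transpose_apply, linkMatrix, add_comm]

theorem isSymm_matchedMatrix : (matchedMatrix t k c).IsSymm :=
  isSymm_fillDiagonal isSymm_farMatrix _

theorem isSymm_coveredMatrix : (coveredMatrix t k c).IsSymm :=
  isSymm_fillDiagonal (isSymm_farMatrix.add isSymm_linkMatrix) _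

theorem cellDegree_inl (hk : 0 < k) (a : Fin t) :
    cellDegree c (.inl a : Cell t k) = ∑ j ∈ Finset.range k, c ^ j :=
  if_pos hk

theorem sum_far_add_link_inl (a : Fin t) :
    ∑ v, (farMatrix t k c + linkMatrix t k) (.inl a) v = ∑ j ∈ Finset.range k, c ^ j := by
  have entry (j : Fin k) : (farMatrix t k c + linkMatrix t k) (.inl a) (.inr j) = c ^ (j : ℕ) := by
    obtain ⟨_ | j, hj⟩ := j <;> simp [farMatrix, linkMatrix, Cell.rank]
  rw [Fintype.sum_sum_type, Finset.sum_range]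
  simp only [entry]
  simp [farMatrix, linkMatrix, Cell.rank]

theorem sum_far_add_link_inr_le (htk : t + k ≤ c + 1) (i : Fin k) :
    ∑ v, (farMatrix t k c + linkMatrix t k) (.inr i) v ≤
      c ^ (i + 1 : ℕ) + ∑ j ∈ Finset.Ico (i + 2 : ℕ) k, c ^ j := by
  have rank_zero (a : Fin t) :
      (farMatrix t k c + linkMatrix t k) (.inr i) (.inl a) = c ^ (i : ℕ) := by
    obtain ⟨_ | i, hi⟩ := i <;> simp [farMatrix, linkMatrix, Cell.rank]
  have rank_pos (j : Fin k) : (farMatrix t k c + linkMatrix t k) (.inr i) (.inr j) ≤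
      (if (j : ℕ) < i then c ^ (i : ℕ) else 0) + if i + 2 ≤ (j : ℕ) then c ^ (j : ℕ) else 0 := by
    simp only [farMatrix, linkMatrix, Cell.rank, Matrix.add_apply]
    grind
  have below : {j ∈ Finset.range k | j < (i : ℕ)} = Finset.range i := by grind
  have above : {j ∈ Finset.range k | (i : ℕ) + 2 ≤ j} = Finset.Ico (i + 2 : ℕ) k := by grind
  calc ∑ v, (farMatrix t k c + linkMatrix t k) (.inr i) v
      ≤ t * c ^ (i : ℕ) + ∑ j : Fin k, ((if (j : ℕ) < i then c ^ (i : ℕ) else 0) +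
          if i + 2 ≤ (j : ℕ) then c ^ (j : ℕ) else 0) := by
        rw [Fintype.sum_sum_type]
        simp only [rank_zero]
        gcongr
        · simp
        · exact rank_pos _
    _ = (t + i) * c ^ (i : ℕ) + ∑ j ∈ Finset.Ico (i + 2 : ℕ) k, c ^ j := by
        rw [Finset.sum_add_distrib,
          Fin.sum_univ_eq_sum_range fun j => if j < (i : ℕ) then c ^ (i : ℕ) else 0,
          Fin.sum_univ_eq_sum_range fun j => if i + 2 ≤ j then c ^ j else 0,
          ← Finset.sum_filter, ← Finset.sum_filter, below, above, Finset.sum_const,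
          Finset.card_range, smul_eq_mul, ← add_assoc, ← add_mul]
    _ ≤ c ^ (i + 1 : ℕ) + ∑ j ∈ Finset.Ico (i + 2 : ℕ) k, c ^ j := by
        rw [pow_succ' c]
        gcongr
        omega

theorem sum_far_add_link_le_cellDegree (hk : 0 < k) (htk : t + k ≤ c + 1)
    (u : Cell t k) : ∑ v, (farMatrix t k c + linkMatrix t k) u v ≤ cellDegree c u := by
  obtain a | i := u
  · rw [sum_far_add_link_inl]
    exact (cellDegree_inl hk a).ge
  · refine (sum_far_add_link_inr_le htk i).trans ?_
    rw [cellDegree]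
    split_ifs with h
    · change (i : ℕ) + 1 < k at h
      rw [← Finset.sum_eq_sum_Ico_succ_bot h (c ^ ·), Finset.range_eq_Ico]
      exact Finset.sum_le_sum_of_subset (Finset.Ico_subset_Ico_left (Nat.zero_le _))
    · have top : (i : ℕ) + 1 = k := le_antisymm i.2 (not_lt.1 h)
      rw [top, Finset.Ico_eq_empty_of_le (by omega), Finset.sum_empty, add_zero]

theorem sum_coveredMatrix (hk : 0 < k) (htk : t + k ≤ c + 1) (u : Cell t k) :
    ∑ v, coveredMatrix t k c u v = cellDegree c u :=
  sum_fillDiagonal (sum_far_add_link_le_cellDegree hk htk u)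

theorem sum_far_le_cellDegree (hk : 0 < k) (htk : t + k ≤ c + 1) (u : Cell t k) :
    ∑ v, farMatrix t k c u v ≤ cellDegree c u :=
  (Finset.sum_le_sum fun _ _ => Nat.le_add_right _ _).trans
    (sum_far_add_link_le_cellDegree hk htk u)

theorem sum_matchedMatrix (hk : 0 < k) (htk : t + k ≤ c + 1) (u : Cell t k) :
    ∑ v, matchedMatrix t k c u v = cellDegree c u :=
  sum_fillDiagonal (sum_far_le_cellDegree hk htk u)

theorem geom_sum_le_pow (hkc : k ≤ c) : ∑ j ∈ Finset.range k, c ^ j ≤ c ^ k := by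
  obtain _ | k := k
  · simp
  · calc ∑ j ∈ Finset.range (k + 1), c ^ j
        ≤ (Finset.range (k + 1)).card • c ^ k := Finset.sum_le_card_nsmul _ _ _ fun j hj =>
          Nat.pow_le_pow_right (by omega) (Nat.le_of_lt_succ (Finset.mem_range.1 hj))
      _ ≤ c ^ (k + 1) := by
        rw [Finset.card_range, smul_eq_mul, pow_succ']
        exact Nat.mul_le_mul_right _ hkc

theorem cellDegree_le (hkc : k ≤ c) (u : Cell t k) : cellDegree c u ≤ c ^ k := by
  rw [cellDegree]
  split_ifs
  · exact geom_sum_le_pow hkc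
  · exact le_rfl

theorem coveredMatrix_le (hk : 0 < k) (hkc : k ≤ c) (htk : t + k ≤ c + 1) (u v : Cell t k) :
    coveredMatrix t k c u v ≤ c ^ k :=
  (fillDiagonal_apply_le (sum_far_add_link_le_cellDegree hk htk u) v).trans (cellDegree_le hkc u)

theorem matchedMatrix_le (hk : 0 < k) (hkc : k ≤ c) (htk : t + k ≤ c + 1) (u v : Cell t k) :
    matchedMatrix t k c u v ≤ c ^ k :=
  (fillDiagonal_apply_le (sum_far_le_cellDegree hk htk u) v).trans (cellDegree_le hkc u)

theorem coveredMatrix_inl_inl (hk : 0 < k) (a b : Fin t) :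
    coveredMatrix t k c (.inl a) (.inl b) = 0 := by
  have off_diagonal : (farMatrix t k c + linkMatrix t k) (.inl a) (.inl b) = 0 := by
    simp [farMatrix, linkMatrix, Cell.rank]
  obtain rfl | hab := eq_or_ne a b
  · rw [coveredMatrix, fillDiagonal_apply_self, off_diagonal, sum_far_add_link_inl,
      cellDegree_inl hk, Nat.sub_self]
  · rw [coveredMatrix, fillDiagonal_apply_of_ne _ _ (by simpa using hab), off_diagonal]

theorem matchedMatrix_self_pos (ht : 0 < t) (hk : 0 < k) (htk : t + k ≤ c + 1) {u : Cell t k}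
    (hu : u.rank ≤ 1) : 0 < matchedMatrix t k c u u := by
  obtain ⟨v, hv⟩ : ∃ v : Cell t k, u.rank + v.rank = 1 := by
    obtain hu | hu : u.rank = 0 ∨ u.rank = 1 := by omega
    · exact ⟨.inr ⟨0, hk⟩, by rw [hu]; rfl⟩
    · exact ⟨.inl ⟨0, ht⟩, by rw [hu]; rfl⟩
  have sum_lt : ∑ v, farMatrix t k c u v < cellDegree c u :=
    calc ∑ v, farMatrix t k c u v < ∑ v, (farMatrix t k c + linkMatrix t k) u v :=
          Finset.sum_lt_sum (fun _ _ => Nat.le_add_right _ _)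
            ⟨v, Finset.mem_univ v, by simp [linkMatrix, hv]⟩
      _ ≤ cellDegree c u := sum_far_add_link_le_cellDegree hk htk u
  rw [matchedMatrix, fillDiagonal_apply_self]
  omega

theorem coveredMatrix_apply_of_rank_add_two_le {u v : Cell t k} (h : u.rank + 2 ≤ v.rank) :
    coveredMatrix t k c u v = c ^ (v.rank - 1) := by
  rw [coveredMatrix, fillDiagonal_apply_of_ne _ _ (by rintro rfl; omega), Matrix.add_apply,
    farMatrix, linkMatrix, if_pos (.inl h), if_neg (by omega), max_eq_right (by omega), add_zero]

theorem matchedMatrix_apply_of_two_le_rank {u v : Cell t k} (hv : 2 ≤ v.rank) :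
    matchedMatrix t k c u v = coveredMatrix t k c u v := by
  obtain rfl | huv := eq_or_ne u v
  · have row_eq : (farMatrix t k c + linkMatrix t k) u = farMatrix t k c u := by
      funext w
      rw [Matrix.add_apply, linkMatrix, if_neg (by omega), add_zero]
    rw [matchedMatrix, coveredMatrix, fillDiagonal_apply_self, fillDiagonal_apply_self, row_eq]
  · rw [matchedMatrix, coveredMatrix, fillDiagonal_apply_of_ne _ _ huv,
      fillDiagonal_apply_of_ne _ _ huv, Matrix.add_apply, linkMatrix, if_neg (by omega), add_zero]

theorem quotientDegree_matchedMatrix (htk : t + k ≤ c + 1) {r : ℕ} (hr : r < k) :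
    quotientDegree (matchedMatrix t k c) r = quotientDegree (coveredMatrix t k c) r := by
  have hk : 0 < k := by omega
  refine quotientDegree_congr_of_rank (rank := Cell.rank) (fun u v hu hv => ?_)
    (fun u v q hu hv => ?_) (fun u => ?_) (fun _ _ => matchedMatrix_apply_of_two_le_rank) hr
  · rw [sum_coveredMatrix hk htk, sum_coveredMatrix hk htk, cellDegree, cellDegree,
      if_pos hu, if_pos hv]
  · rw [coveredMatrix_apply_of_rank_add_two_le hu, coveredMatrix_apply_of_rank_add_two_le hv]
  · rw [sum_matchedMatrix hk htk, sum_coveredMatrix hk htk]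

theorem card_rank_le_one (hk : 0 < k) : Finset.card {u : Cell t k | u.rank ≤ 1} = t + 1 := by
  obtain ⟨k, rfl⟩ := Nat.exists_eq_add_of_lt hk
  rw [Finset.card_filter, Fintype.sum_sum_type, Fin.sum_univ_succ]
  simp [Cell.rank]

end Cells

theorem identical_kLevelDegrees_matching_vs_cover_general (k c : ℕ) (hk : 1 ≤ k) (hkc : k ≤ c) :
    ∃ (n : ℕ) (G H : SimpleGraph (Fin n)) (Φ : Fin n ≃ Fin n),
      (∀ v : Fin n, kdeg G (k - 1) v = kdeg H (k - 1) (Φ v)) ∧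
      (∃ M : Set (Sym2 (Fin n)), IsMatchingSet G M ∧ M.ncard = (c - k + 2) * c ^ k) ∧
      (∃ C : Set (Fin n), (∀ e ∈ H.edgeSet, ∃ v ∈ C, v ∈ e) ∧ C.ncard ≤ 2 * k * c ^ k) := by
  have : NeZero (c ^ k) := ⟨pow_ne_zero k (by omega)⟩
  obtain ⟨t, ht⟩ : ∃ t, t = c - k + 1 := ⟨_, rfl⟩
  have htk : t + k ≤ c + 1 := by omega
  let G := doubleBlowup (c ^ k) (matchedMatrix t k c) isSymm_matchedMatrix
  let H := doubleBlowup (c ^ k) (coveredMatrix t k c) isSymm_coveredMatrix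
  let φ : G ≃g G.overFin rfl := G.overFinIso rfl
  let ψ : H ≃g H.overFin rfl := H.overFinIso rfl
  refine ⟨_, G.overFin rfl, H.overFin rfl, φ.symm.toEquiv.trans ψ.toEquiv, fun v => ?_, ?_, ?_⟩
  · obtain ⟨v, rfl⟩ := φ.surjective v
    have hφ : (φ.symm.toEquiv.trans ψ.toEquiv) (φ v) = ψ v := by simp
    rw [hφ, kdeg_iso, kdeg_iso, (isEquitable_doubleBlowup _ (matchedMatrix_le hk hkc htk)).kdeg_eq,
      (isEquitable_doubleBlowup _ (coveredMatrix_le hk hkc htk)).kdeg_eq,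
      quotientDegree_matchedMatrix htk (by omega)]
  · obtain ⟨E, hE, hcard⟩ := exists_isMatchingSet_doubleBlowup (M := c ^ k)
      isSymm_matchedMatrix {u : Cell t k | u.rank ≤ 1} fun u hu =>
        matchedMatrix_self_pos (c := c) (by omega) hk htk (by simpa using hu)
    refine ⟨_, hE.image φ.toEmbedding, ?_⟩
    rw [Set.ncard_image_of_injective _ (Sym2.map.injective φ.toEmbedding.injective), hcard,
      card_rank_le_one hk, ht]
  · have cover : H.IsVertexCover (Set.univ ×ˢ Set.range Sum.inr ×ˢ Set.univ) :=
      isVertexCover_doubleBlowup _ (by simpa using coveredMatrix_inl_inl hk)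
    refine ⟨_, exists_mem_of_isVertexCover ((isVertexCover_image_iso ψ).2 cover), ?_⟩
    rw [Set.ncard_image_of_injective _ ψ.injective, Set.ncard_prod, Set.ncard_prod,
      Set.ncard_range_of_injective Sum.inr_injective]
    simp [Set.ncard_univ, mul_assoc]

theorem half_succ_mul_pow_le {k c : ℕ} (hc : 2 * k ≤ c) :
    ((c : ℝ) + 1) * (c : ℝ) ^ k / 2 ≤ ((c - k + 2) * c ^ k : ℕ) := by
  have : (c : ℝ) + 1 ≤ 2 * (c - k + 2 : ℕ) := by exact_mod_cast (by omega)
  rw [div_le_iff₀ two_pos, Nat.cast_mul, Nat.cast_pow, mul_right_comm, mul_comm _ (2 : ℝ)]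
  gcongr

/-- For all integers `k ≥ 1` and `c ≥ 2k`, there exist finite simple graphs
`G` and `H` on the same number of vertices and a bijection `Φ` of their vertex sets preserving
`k`-level degrees such that `G` contains a matching of size at least `(c+1)·c^k/2` and `H` has a
vertex cover of size at most `2k·c^k`. -/
theorem identical_kLevelDegrees_matching_vs_cover (k c : ℕ) (hk : 1 ≤ k) (hc : 2 * k ≤ c) :
    ∃ (n : ℕ) (G H : SimpleGraph (Fin n)) (Φ : Fin n ≃ Fin n),
      (∀ v : Fin n, kdeg G (k - 1) v = kdeg H (k - 1) (Φ v)) ∧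
      (∃ M : Set (Sym2 (Fin n)), IsMatchingSet G M ∧
        ((c : ℝ) + 1) * (c : ℝ) ^ k / 2 ≤ (M.ncard : ℝ)) ∧
      (∃ C : Set (Fin n), (∀ e ∈ H.edgeSet, ∃ v ∈ C, v ∈ e) ∧ C.ncard ≤ 2 * k * c ^ k) := by
  obtain ⟨n, G, H, Φ, hΦ, ⟨M, hM, hMcard⟩, hC⟩ :=
    identical_kLevelDegrees_matching_vs_cover_general k c hk (by omega)
  exact ⟨n, G, H, Φ, hΦ, ⟨M, hM, hMcard ▸ half_succ_mul_pow_le hc⟩, hC⟩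
end

section
/- There is an absolute constant C such that the following holds. For every finite simple graph G = (V, E) with n ≥ 2 vertices and every integer g ≥ 1, there exist an integer R with 1 ≤ R ≤ n^{C·g} and a finite simple graph L on vertex set V × {1, …, R} such that: (1) R·ν(G) ≤ ν(L) ≤ 2R·ν(G); (2) L contains no cycle of length less than g; and (3) for every integer k ≥ 1, every v ∈ V and every r ∈ {1, …, R}, d_k^L((v, r)) = d_k^G(v). -/
open SimpleGraph

/-!
A covering map of graphs with `R`-element fibres preserves all `k`-level degrees, it pulls a
matching `M` of `G` back to a matching with `R` times as many edges, and it pulls the `2ν(G)`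
vertices covered by a maximum matching of `G`, which form a vertex cover, back to a vertex cover
of `L`. So it suffices to find a covering with few sheets and large girth.

Give the edge `uv` the label `c = 2 (ι u + ι v)` for an injection `ι : V → {0, …, n - 1}`, and the
voltage `A_c = !![c, 1 - c²; 1, -c]`, an involution of `GL₂(ℤ/q)`. It acts on the projective line as
`z ↦ c + 1 / (z - c)`, which exchanges the inside and the outside of the interval
`(c - 1, c + 1)`. Consecutive labels on a non-backtracking walk differ by at least `2`, so these
intervals are disjoint and ping-pong over `ℤ` shows that the product of the matrices along the walk
has a nonzero lower left entry. As the labels differ by less than `2n`, this entry is smaller than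
`(2n)^g` when the walk has length at most `g`. For `q = (2n)^g` it therefore remains nonzero modulo
`q`, and the walk does not lift to a closed one.
-/

/-! ### Matchings and the vertices they cover -/

section Matching

variable {V : Type*} {G : SimpleGraph V} {M : Set (Sym2 V)}

/-- The vertices covered (saturated) by a set of edges. -/
def coveredVertices (M : Set (Sym2 V)) : Set V := {v | ∃ e ∈ M, v ∈ e}

lemma bddAbove_ncard_isMatchingSet [Finite V] (G : SimpleGraph V) :
    BddAbove {n | ∃ M : Set (Sym2 V), IsMatchingSet G M ∧ M.ncard = n} := by
  refine ⟨(Set.univ : Set (Sym2 V)).ncard, ?_⟩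
  rintro n ⟨M, -, rfl⟩
  exact Set.ncard_le_ncard (Set.subset_univ M)

lemma exists_isMatchingSet_ncard_eq [Finite V] (G : SimpleGraph V) :
    ∃ M : Set (Sym2 V), IsMatchingSet G M ∧ M.ncard = matchingNumber G :=
  Nat.sSup_mem (s := {n | ∃ M : Set (Sym2 V), IsMatchingSet G M ∧ M.ncard = n})
    ⟨0, ∅, ⟨by simp, by simp⟩, by simp⟩ (bddAbove_ncard_isMatchingSet G)

namespace IsMatchingSet

lemma ncard_le_matchingNumber [Finite V] (hM : IsMatchingSet G M) :
    M.ncard ≤ matchingNumber G :=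
  le_csSup (bddAbove_ncard_isMatchingSet G) ⟨M, hM, rfl⟩

lemma eq_of_mem_of_mem (hM : IsMatchingSet G M) {e f : Sym2 V} (he : e ∈ M) (hf : f ∈ M) {v : V}
    (hve : v ∈ e) (hvf : v ∈ f) : e = f := by
  by_contra hef
  exact hM.2 e he f hf hef v ⟨hve, hvf⟩

lemma insert (hM : IsMatchingSet G M) {u v : V} (huv : G.Adj u v) (hu : u ∉ coveredVertices M)
    (hv : v ∉ coveredVertices M) : IsMatchingSet G (insert s(u, v) M) := by
  have disjoint : ∀ e ∈ M, ∀ w ∈ s(u, v), w ∉ e := by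
    intro e he w hw hwe
    rcases Sym2.mem_iff.1 hw with rfl | rfl
    · exact hu ⟨e, he, hwe⟩
    · exact hv ⟨e, he, hwe⟩
  refine ⟨Set.insert_subset huv hM.1, ?_⟩
  rintro e (rfl | he) f (rfl | hf) hef w ⟨hwe, hwf⟩
  · exact hef rfl
  · exact disjoint f hf w hwe hwf
  · exact disjoint e he w hwf hwe
  · exact hM.2 e he f hf hef w ⟨hwe, hwf⟩

lemma isVertexCover_coveredVertices [Finite V] (hM : IsMatchingSet G M)
    (hmax : M.ncard = matchingNumber G) : G.IsVertexCover (coveredVertices M) := by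
  intro u v huv
  by_contra! h
  have huvM : s(u, v) ∉ M := fun hmem => h.1 ⟨_, hmem, Sym2.mem_mk_left u v⟩
  have hle := (hM.insert huv h.1 h.2).ncard_le_matchingNumber
  rw [Set.ncard_insert_of_notMem huvM, hmax] at hle
  omega

lemma ncard_coveredVertices [Finite V] (hM : IsMatchingSet G M) :
    (coveredVertices M).ncard = 2 * M.ncard := by
  classical
  have hunion : coveredVertices M = M.toFinite.toFinset.biUnion Sym2.toFinset := by
    ext v
    simp [coveredVertices]
  have hdisj : (M.toFinite.toFinset : Set (Sym2 V)).PairwiseDisjoint Sym2.toFinset := by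
    intro e he f hf hef
    rw [Function.onFun, Finset.disjoint_left]
    intro v hve hvf
    exact hef (hM.eq_of_mem_of_mem (by simpa using he) (by simpa using hf)
      (Sym2.mem_toFinset.1 hve) (Sym2.mem_toFinset.1 hvf))
  have htwo : ∀ e ∈ M.toFinite.toFinset, e.toFinset.card = 2 := fun e he =>
    e.card_toFinset_of_not_isDiag (G.not_isDiag_of_mem_edgeSet (hM.1 (by simpa using he)))
  rw [hunion, Set.ncard_coe_finset, Finset.card_biUnion hdisj, Finset.sum_const_nat htwo,
    Set.ncard_eq_toFinset_card M, mul_comm]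

lemma ncard_le_of_isVertexCover [Finite V] (hM : IsMatchingSet G M) {S : Set V}
    (hS : G.IsVertexCover S) : M.ncard ≤ S.ncard := by
  rw [Set.ncard_eq_toFinset_card M, Set.ncard_eq_toFinset_card S]
  refine Finset.card_le_card_of_forall_subsingleton (fun e v => v ∈ e) ?_ ?_
  · intro e he
    have heM : e ∈ M := M.toFinite.mem_toFinset.1 he
    induction e with
    | _ u v =>
      rcases hS (hM.1 heM) with hu | hv
      · exact ⟨u, S.toFinite.mem_toFinset.2 hu, Sym2.mem_mk_left u v⟩
      · exact ⟨v, S.toFinite.mem_toFinset.2 hv, Sym2.mem_mk_right u v⟩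
  · rintro v - e ⟨he, hve⟩ e' ⟨he', hve'⟩
    exact hM.eq_of_mem_of_mem (M.toFinite.mem_toFinset.1 he) (M.toFinite.mem_toFinset.1 he')
      hve hve'

end IsMatchingSet

end Matching

/-! ### Coverings of graphs -/

section Covering

variable {V W : Type*}

/-- A covering of graphs: a homomorphism that maps the neighbourhood of every vertex bijectively
onto the neighbourhood of its image. Surjectivity on vertices is not part of the definition. -/
def IsGraphCovering {L : SimpleGraph W} {G : SimpleGraph V} (f : L →g G) : Prop :=
  ∀ x, Set.BijOn f (L.neighborSet x) (G.neighborSet (f x))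

lemma ncard_preimage_le_mul [Finite V] [Finite W] {f : W → V} {R : ℕ}
    (hf : ∀ v, (f ⁻¹' {v}).ncard ≤ R) (S : Set V) : (f ⁻¹' S).ncard ≤ R * S.ncard := by
  classical
  rw [Set.ncard_eq_toFinset_card S, Set.ncard_eq_toFinset_card (f ⁻¹' S)]
  refine Finset.card_le_mul_card_image_of_maps_to (f := f) (by simp) R fun v _ => ?_
  refine le_trans ?_ (hf v)
  rw [← Set.ncard_coe_finset]
  exact Set.ncard_le_ncard fun x hx => (Finset.mem_filter.1 hx).2

lemma mul_ncard_le_ncard_preimage [Finite V] [Finite W] {f : W → V} {R : ℕ}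
    (hf : ∀ v, R ≤ (f ⁻¹' {v}).ncard) (S : Set V) : R * S.ncard ≤ (f ⁻¹' S).ncard := by
  classical
  rw [Set.ncard_eq_toFinset_card S, Set.ncard_eq_toFinset_card (f ⁻¹' S)]
  refine Finset.mul_card_image_le_card_of_maps_to (f := f) (by simp) R fun v hv => ?_
  refine (hf v).trans ?_
  rw [← Set.ncard_coe_finset]
  refine Set.ncard_le_ncard fun x hx => ?_
  have hxv : f x = v := hx
  simpa [hxv] using hv

variable {L : SimpleGraph W} {G : SimpleGraph V}

lemma matchingNumber_le_of_fiber_le [Finite V] [Finite W] {R : ℕ} (f : L →g G)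
    (hR : ∀ v, (f ⁻¹' {v}).ncard ≤ R) : matchingNumber L ≤ 2 * R * matchingNumber G := by
  obtain ⟨M, hM, hMmax⟩ := exists_isMatchingSet_ncard_eq G
  obtain ⟨N, hN, hNmax⟩ := exists_isMatchingSet_ncard_eq L
  calc matchingNumber L = N.ncard := hNmax.symm
    _ ≤ (f ⁻¹' coveredVertices M).ncard :=
      hN.ncard_le_of_isVertexCover ((hM.isVertexCover_coveredVertices hMmax).preimage f)
    _ ≤ R * (coveredVertices M).ncard := ncard_preimage_le_mul hR _
    _ = 2 * R * matchingNumber G := by rw [hM.ncard_coveredVertices, hMmax]; ring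

namespace IsGraphCovering

variable {f : L →g G}

lemma isMatchingSet_preimage (hf : IsGraphCovering f) {M : Set (Sym2 V)}
    (hM : IsMatchingSet G M) : IsMatchingSet L {e ∈ L.edgeSet | e.map f ∈ M} := by
  refine ⟨fun e he => he.1, ?_⟩
  rintro e ⟨he, heM⟩ e' ⟨he', heM'⟩ hne x ⟨hxe, hxe'⟩
  obtain ⟨a, rfl⟩ := hxe
  obtain ⟨b, rfl⟩ := hxe'
  have hmap : s(f x, f a) = s(f x, f b) :=
    hM.eq_of_mem_of_mem heM heM' (Sym2.mem_mk_left _ _) (Sym2.mem_mk_left _ _)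
  have hab : a = b := (hf x).injOn he he' (Sym2.congr_right.1 hmap)
  exact hne (by rw [hab])

lemma preimage_coveredVertices_subset (hf : IsGraphCovering f) {M : Set (Sym2 V)}
    (hM : M ⊆ G.edgeSet) :
    f ⁻¹' coveredVertices M ⊆ coveredVertices {e ∈ L.edgeSet | e.map f ∈ M} := by
  rintro x ⟨e, he, hxe⟩
  obtain ⟨v, rfl⟩ := hxe
  obtain ⟨y, hxy, rfl⟩ := (hf x).surjOn (hM he)
  exact ⟨s(x, y), ⟨hxy, he⟩, Sym2.mem_mk_left x y⟩

lemma mul_matchingNumber_le [Finite V] [Finite W] (hf : IsGraphCovering f) {R : ℕ}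
    (hR : ∀ v, R ≤ (f ⁻¹' {v}).ncard) : R * matchingNumber G ≤ matchingNumber L := by
  obtain ⟨M, hM, hmax⟩ := exists_isMatchingSet_ncard_eq G
  set N : Set (Sym2 W) := {e ∈ L.edgeSet | e.map f ∈ M}
  have hN : IsMatchingSet L N := hf.isMatchingSet_preimage hM
  have hdouble : 2 * (R * matchingNumber G) ≤ 2 * N.ncard := calc
    2 * (R * matchingNumber G) = R * (coveredVertices M).ncard := by
      rw [hM.ncard_coveredVertices, hmax]; ring
    _ ≤ (f ⁻¹' coveredVertices M).ncard := mul_ncard_le_ncard_preimage hR _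
    _ ≤ (coveredVertices N).ncard :=
      Set.ncard_le_ncard (hf.preimage_coveredVertices_subset hM.1)
    _ = 2 * N.ncard := hN.ncard_coveredVertices
  exact (Nat.le_of_mul_le_mul_left hdouble two_pos).trans hN.ncard_le_matchingNumber

lemma kdeg_eq [Fintype V] [Fintype W] (hf : IsGraphCovering f) (k : ℕ) (x : W) :
    kdeg L k x = kdeg G k (f x) := by
  classical
  induction k generalizing x with
  | zero =>
    rw [kdeg, kdeg, ← (hf x).image_eq, (hf x).injOn.ncard_image]
  | succ k ih =>
    have himage : (L.neighborSet x).toFinite.toFinset.image f =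
        (G.neighborSet (f x)).toFinite.toFinset := by
      rw [← Finset.coe_inj]
      simpa using (hf x).image_eq
    have hinj : Set.InjOn f (L.neighborSet x).toFinite.toFinset := by
      simpa using (hf x).injOn
    rw [kdeg, kdeg, ← himage, Finset.image_val_of_injOn hinj, Multiset.map_map]
    exact Multiset.map_congr rfl fun y _ => ih y

lemma isChain_darts_of_isTrail (hf : IsGraphCovering f) {x y : W} {p : L.Walk x y}
    (hp : p.IsTrail) :
    p.darts.IsChain fun d d' => d.snd = d'.fst ∧ f d.fst ≠ f d'.snd := by
  have hedge : p.darts.IsChain fun d d' => d.edge ≠ d'.edge :=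
    (List.pairwise_map.1 hp.edges_nodup).isChain
  rw [List.isChain_iff_getElem] at hedge ⊢
  intro i hi
  have hadj : p.darts[i].snd = p.darts[i + 1].fst := p.isChain_dartAdj_darts.getElem i hi
  refine ⟨hadj, fun hfd => hedge i hi ?_⟩
  have hback : p.darts[i].fst = p.darts[i + 1].snd :=
    (hf p.darts[i].snd).injOn p.darts[i].adj.symm (hadj ▸ p.darts[i + 1].adj) hfd
  exact (dart_edge_eq_iff _ _).2 (Or.inr (Dart.ext _ _ (Prod.ext hback hadj)))

end IsGraphCovering

end Covering

/-! ### Voltage lifts -/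

section VoltageLift

variable {V Γ : Type*} (I : Type*) [Group Γ] [MulAction Γ I]

/-- The lift of `G` along voltages `α u v` in a group `Γ` acting on `I`: over the edge `uv`, the
vertex `(v, i)` is joined to `(u, α u v • i)`. -/
def voltageLift (G : SimpleGraph V) (α : V → V → Γ) (hα : ∀ u v, α v u = (α u v)⁻¹) :
    SimpleGraph (V × I) where
  Adj x y := G.Adj x.1 y.1 ∧ x.2 = α x.1 y.1 • y.2
  symm := ⟨fun x y ⟨hadj, hxy⟩ => ⟨hadj.symm, by rw [hxy, hα, inv_smul_smul]⟩⟩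
  loopless := ⟨fun _ h => h.1.ne rfl⟩

namespace voltageLift

variable (G : SimpleGraph V) (α : V → V → Γ) (hα : ∀ u v, α v u = (α u v)⁻¹)

/-- The projection of a voltage lift onto the base graph. -/
def proj : voltageLift I G α hα →g G := ⟨Prod.fst, And.left⟩

lemma isGraphCovering_proj : IsGraphCovering (proj I G α hα) := by
  rintro ⟨u, i⟩
  refine ⟨fun y hy => hy.1, ?_, ?_⟩
  · rintro ⟨v, j⟩ ⟨-, hj⟩ ⟨v', j'⟩ ⟨-, hj'⟩ (rfl : v = v')
    have hjj' : j = j' := smul_left_cancel (α u v) (hj.symm.trans hj')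
    rw [hjj']
  · intro v huv
    exact ⟨(v, (α u v)⁻¹ • i), ⟨huv, (smul_inv_smul _ _).symm⟩, rfl⟩

lemma ncard_fiber_proj (v : V) : (proj I G α hα ⁻¹' {v}).ncard = Nat.card I := by
  have hfiber : proj I G α hα ⁻¹' {v} = {v} ×ˢ (Set.univ : Set I) := Set.prod_univ.symm
  rw [hfiber, Set.ncard_prod, Set.ncard_singleton, Set.ncard_univ, one_mul]

variable {I G α hα}

lemma prod_darts_smul {x y : V × I} (p : (voltageLift I G α hα).Walk x y) :
    (p.darts.map fun d => α d.fst.1 d.snd.1).prod • y.2 = x.2 := by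
  induction p with
  | nil => simp
  | cons h p ih => rw [Walk.darts_cons, List.map_cons, List.prod_cons, mul_smul, ih, h.2]

end voltageLift

end VoltageLift

/-! ### Products of inversions in `GL₂` -/

section Inversion

open Matrix

variable {K : Type*} [CommRing K] [LinearOrder K] [IsStrictOrderedRing K]

lemma abs_lt_abs_sub_mul {y z t : K} (hyz : |y| < |z|) (ht : 2 ≤ |t|) : |z| < |y - t * z| := by
  have htri : |t * z| - |y| ≤ |y - t * z| := abs_sub_comm y _ ▸ abs_sub_abs_le_abs_sub _ _
  rw [abs_mul] at htri
  nlinarith [abs_nonneg z]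

lemma abs_sub_mul_le {y z t M : K} (hyz : |y| ≤ |z|) (ht : |t| + 1 ≤ M) :
    |y - t * z| ≤ M * |z| := by
  have htri : |y - t * z| ≤ |y| + |t * z| := abs_sub y _
  rw [abs_mul] at htri
  nlinarith [abs_nonneg z]

variable {A : Type*} [CommRing A]

/-- The involution of `GL₂` acting on the projective line as the inversion
`z ↦ c + 1 / (z - c)` in the unit circle about `c`. -/
def inversionAt (c : A) : GL (Fin 2) A where
  val := !![c, 1 - c ^ 2; 1, -c]
  inv := !![c, 1 - c ^ 2; 1, -c]
  val_inv := by ext i j; fin_cases i <;> fin_cases j <;> simp <;> ring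
  inv_val := by ext i j; fin_cases i <;> fin_cases j <;> simp <;> ring

namespace inversionAt

lemma inv_eq (c : A) : (inversionAt c)⁻¹ = inversionAt c := rfl

lemma map_eq {B : Type*} [CommRing B] (φ : A →+* B) (c : A) :
    GeneralLinearGroup.map φ (inversionAt c) = inversionAt (φ c) := by
  ext i j
  fin_cases i <;> fin_cases j <;> simp [inversionAt]

lemma lowerLeft_prod_singleton (c : A) : ([c].map inversionAt).prod 1 0 = 1 := by
  simp [inversionAt]

-- Both sides equal `x - d * y`, where `(x, y)` is the first column of the product over `c :: l`.
lemma lowerLeft_prod_cons_cons (d c : A) (l : List A) :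
    ((d :: c :: l).map inversionAt).prod 1 0 =
      (l.map inversionAt).prod 1 0 - (d - c) * ((c :: l).map inversionAt).prod 1 0 := by
  simp only [inversionAt, List.map_cons, List.prod_cons, Units.val_mul, mul_apply,
    Fin.sum_univ_two, of_apply, cons_val', cons_val_zero, cons_val_one, cons_val_fin_one]
  ring

lemma abs_lowerLeft_prod_growth {M : K} (c : K) (l : List K)
    (hl : (c :: l).IsChain fun c d => 2 ≤ |c - d| ∧ |c - d| + 1 ≤ M) :
    |(l.map inversionAt).prod 1 0| < |((c :: l).map inversionAt).prod 1 0| ∧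
      |((c :: l).map inversionAt).prod 1 0| ≤ M ^ l.length := by
  induction l generalizing c with
  | nil => simp [-List.map_cons, lowerLeft_prod_singleton]
  | cons d l ih =>
    obtain ⟨⟨hsep, hbound⟩, htail⟩ := List.isChain_cons_cons.1 hl
    obtain ⟨hlt, hle⟩ := ih d htail
    rw [lowerLeft_prod_cons_cons c d l]
    refine ⟨abs_lt_abs_sub_mul hlt hsep, ?_⟩
    have hM : 0 ≤ M := (add_nonneg (abs_nonneg _) zero_le_one).trans hbound
    calc _ ≤ M * |((d :: l).map inversionAt).prod 1 0| := abs_sub_mul_le hlt.le hbound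
      _ ≤ M * M ^ l.length := by gcongr
      _ = M ^ (d :: l).length := by rw [List.length_cons, pow_succ']

lemma prod_zmod_ne_one {M g : ℕ} (hM : 1 < M) {l : List ℤ} (hnil : l ≠ []) (hlen : l.length ≤ g)
    (hl : l.IsChain fun c d => 2 ≤ |c - d| ∧ |c - d| < (M : ℤ)) :
    (l.map fun c : ℤ => inversionAt (c : ZMod (M ^ g))).prod ≠ 1 := by
  obtain ⟨c, l, rfl⟩ := List.exists_cons_of_ne_nil hnil
  set y : ℤ := ((c :: l).map inversionAt).prod 1 0
  obtain ⟨hgrow, hle⟩ :=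
    abs_lowerLeft_prod_growth c l (hl.imp fun _ _ h => ⟨h.1, Int.add_one_le_of_lt h.2⟩)
  have hy : y ≠ 0 := abs_pos.1 ((abs_nonneg _).trans_lt hgrow)
  have hlt : |y| < ((M ^ g : ℕ) : ℤ) := by
    refine hle.trans_lt ?_
    exact_mod_cast Nat.pow_lt_pow_right hM hlen
  intro hone
  have hcast : (y : ZMod (M ^ g)) = 0 := calc
    (y : ZMod (M ^ g)) = GeneralLinearGroup.map (Int.castRingHom (ZMod (M ^ g)))
        ((c :: l).map inversionAt).prod 1 0 := rfl
    _ = ((c :: l).map fun c : ℤ => inversionAt (c : ZMod (M ^ g))).prod 1 0 := by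
      rw [map_list_prod, List.map_map]
      simp only [Function.comp_def, map_eq, eq_intCast]
    _ = 0 := by rw [hone]; simp
  exact hy (Int.eq_zero_of_abs_lt_dvd ((ZMod.intCast_zmod_eq_zero_iff_dvd _ _).1 hcast) hlt)

end inversionAt

lemma card_GL_le {m : Type*} [Fintype m] [DecidableEq m] [Finite A] :
    Nat.card (GL m A) ≤ Nat.card A ^ (Fintype.card m * Fintype.card m) := by
  calc Nat.card (GL m A) ≤ Nat.card (m → m → A) :=
      Nat.card_le_card_of_injective _ (Matrix.of.symm.injective.comp Units.val_injective)
    _ = _ := by simp [Nat.card_fun, pow_mul]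

end Inversion

/-! ### Lifts of large girth -/

lemma exists_separated_edge_labelling (V : Type*) [Fintype V] :
    ∃ c : V → V → ℤ, (∀ u v, c v u = c u v) ∧ ∀ u v w, u ≠ w →
      2 ≤ |c u v - c v w| ∧ |c u v - c v w| < ((2 * Fintype.card V : ℕ) : ℤ) := by
  let ι := Fintype.equivFin V
  refine ⟨fun u v => 2 * ((ι u : ℤ) + (ι v : ℤ)), fun u v => by ring, fun u v w huw => ?_⟩
  have hne : (ι u : ℕ) ≠ ι w := fun h => huw (ι.injective (Fin.ext h))
  have hu := (ι u).isLt
  have hw := (ι w).isLt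
  simp only [le_abs, abs_lt]
  omega

lemma le_egirth_voltageLift_inversionAt {V : Type*} (G : SimpleGraph V) {M g : ℕ} (hM : 1 < M)
    (I : Type*) [MulAction (Matrix.GeneralLinearGroup (Fin 2) (ZMod (M ^ g))) I]
    [IsCancelSMul (Matrix.GeneralLinearGroup (Fin 2) (ZMod (M ^ g))) I] {c : V → V → ℤ}
    (hc : ∀ u v w, u ≠ w → 2 ≤ |c u v - c v w| ∧ |c u v - c v w| < (M : ℤ))
    (hα : ∀ u v, inversionAt (c v u : ZMod (M ^ g)) = (inversionAt (c u v : ZMod (M ^ g)))⁻¹) :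
    (g : ℕ∞) ≤ (voltageLift I G (fun u v => inversionAt (c u v : ZMod (M ^ g))) hα).egirth := by
  refine le_egirth.2 fun x p hp => ?_
  by_contra! hlt
  set labels : List ℤ := p.darts.map fun d => c d.fst.1 d.snd.1 with hlabels
  have hchain : labels.IsChain fun c d => 2 ≤ |c - d| ∧ |c - d| < (M : ℤ) := by
    refine (List.isChain_map _).2 <|
      ((voltageLift.isGraphCovering_proj I G _ hα).isChain_darts_of_isTrail hp.isTrail).imp ?_
    rintro d d' ⟨hadj, hne⟩
    rw [hadj]
    exact hadj ▸ hc _ _ _ hne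
  have hprod : (labels.map fun c : ℤ => inversionAt (c : ZMod (M ^ g))).prod = 1 := by
    rw [hlabels, List.map_map]
    exact IsCancelSMul.eq_one_of_smul (voltageLift.prod_darts_smul p)
  have hnil : labels ≠ [] := by
    simpa [hlabels, Walk.darts_eq_nil] using hp.not_nil
  have hlen : labels.length ≤ g := by
    rw [hlabels, List.length_map, Walk.length_darts]
    exact_mod_cast hlt.le
  exact inversionAt.prod_zmod_ne_one hM hnil hlen hchain hprod

lemma card_GL_two_zmod_le {n : ℕ} (hn : 2 ≤ n) (g : ℕ) :
    Nat.card (Matrix.GeneralLinearGroup (Fin 2) (ZMod ((2 * n) ^ g))) ≤ n ^ (8 * g) := by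
  have : NeZero ((2 * n) ^ g) := ⟨by positivity⟩
  calc Nat.card (Matrix.GeneralLinearGroup (Fin 2) (ZMod ((2 * n) ^ g)))
      ≤ ((2 * n) ^ g) ^ 4 := by simpa using card_GL_le (m := Fin 2) (A := ZMod ((2 * n) ^ g))
    _ ≤ ((n * n) ^ g) ^ 4 := by gcongr
    _ = n ^ (8 * g) := by ring

/-- **the lifting theorem.** There is an absolute constant `C` such that for every
finite simple graph `G` on `n ≥ 2` vertices and every integer `g ≥ 1` there are `R` with
`1 ≤ R ≤ n^(C·g)` and a graph `L` on vertex set `V × Fin R` with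
`R·ν(G) ≤ ν(L) ≤ 2R·ν(G)`, no cycle of length `< g`, and `d_k^L((v,r)) = d_k^G(v)` for all
`k ≥ 1`, `v`, `r`. -/
theorem lifting_theorem :
    ∃ C : ℝ, 0 < C ∧
      ∀ (V : Type) [Fintype V] (G : SimpleGraph V), 2 ≤ Fintype.card V →
        ∀ g : ℕ, 1 ≤ g →
          ∃ (R : ℕ) (L : SimpleGraph (V × Fin R)),
            1 ≤ R ∧ (R : ℝ) ≤ (Fintype.card V : ℝ) ^ (C * (g : ℝ)) ∧
            R * matchingNumber G ≤ matchingNumber L ∧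
            matchingNumber L ≤ 2 * R * matchingNumber G ∧
            ((g : ℕ∞) ≤ L.egirth) ∧
            ∀ k : ℕ, 1 ≤ k → ∀ (v : V) (r : Fin R),
              kdeg L (k - 1) (v, r) = kdeg G (k - 1) v := by
  refine ⟨8, by norm_num, fun V _ G hn g _ => ?_⟩
  obtain ⟨c, hsymm, hsep⟩ := exists_separated_edge_labelling V
  let Γ := Matrix.GeneralLinearGroup (Fin 2) (ZMod ((2 * Fintype.card V) ^ g))
  have : NeZero ((2 * Fintype.card V) ^ g) := ⟨by positivity⟩
  let e : Fin (Nat.card Γ) ≃ Γ := (Finite.equivFin Γ).symm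
  let : MulAction Γ (Fin (Nat.card Γ)) := e.mulAction Γ
  have : IsCancelSMul Γ (Fin (Nat.card Γ)) :=
    ⟨fun a b i h => mul_right_cancel (e.symm.injective h)⟩
  have hα : ∀ u v, (inversionAt (c v u) : Γ) = (inversionAt (c u v) : Γ)⁻¹ := fun u v => by
    rw [hsymm, inversionAt.inv_eq]
  have hcov := voltageLift.isGraphCovering_proj (Fin (Nat.card Γ)) G _ hα
  have hfiber := voltageLift.ncard_fiber_proj (Fin (Nat.card Γ)) G _ hα
  rw [Nat.card_fin] at hfiber
  refine ⟨Nat.card Γ, voltageLift _ G _ hα, Nat.card_pos, ?_,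
    hcov.mul_matchingNumber_le fun v => (hfiber v).ge,
    matchingNumber_le_of_fiber_le _ fun v => (hfiber v).le,
    le_egirth_voltageLift_inversionAt G (by omega) _ hsep hα,
    fun k _ v r => hcov.kdeg_eq (k - 1) (v, r)⟩
  calc (Nat.card Γ : ℝ) ≤ (Fintype.card V : ℝ) ^ (8 * g) := mod_cast card_GL_two_zmod_le hn g
    _ = (Fintype.card V : ℝ) ^ ((8 : ℝ) * g) := by rw [← Real.rpow_natCast]; push_cast; rfl
end
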